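/- Let n = 4 and let h be a continuous function on [0,∞) with h(r) ≤ 0 for all r > 0. Then for any α < 0, the solution u of the ODE u''(r) + (3/r)u'(r) − 2u(r)³ − (6/r)u(r)² − (3/r²)u(r) = [u'(r) + u(r)/r]·h(r) with initial conditions u(0) = 0, u'(0) = α is global, and it satisfies −2/r < u(r) < 0 for all r > 0. -/

import Mathlib

/-- The ODE (equaz) for `n = 4`:
    `u'' + (3/r)u' - 2u³ - (6/r)u² - (3/r²)u = [u' + u/r]·h(r)`
    (the term `(n-4)uu'` vanishes for `n = 4`), stated pointwise at `r`. -/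
def Equaz4 (h u u' u'' : ℝ → ℝ) (r : ℝ) : Prop :=
  u'' r + 3 / r * u' r - 2 * u r ^ 3 - 6 / r * u r ^ 2 - 3 / r ^ 2 * u r
    = (u' r + u r / r) * h r

/-- `u` (with derivatives `u'`, `u''`) is a C² solution of (equaz) (with `n = 4`) on the
    set `S` with initial conditions `u(0) = 0`, `u'(0) = α`. -/
def SolOn4 (h : ℝ → ℝ) (α : ℝ) (u u' u'' : ℝ → ℝ) (S : Set ℝ) : Prop :=
  (∀ r ∈ S, HasDerivWithinAt u (u' r) S r) ∧
  (∀ r ∈ S, HasDerivWithinAt u' (u'' r) S r) ∧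
  ContinuousOn u'' S ∧
  u 0 = 0 ∧ u' 0 = α ∧
  ∀ r ∈ S, 0 < r → Equaz4 h u u' u'' r

/-!
Writing `u = r y` turns (equaz) into `r y'' + 5 y' = r (6 y² + 2 r² y³) + h (2 y + r y')`. With the
nonlinear terms truncated to `y ∈ [α - 1, 0]`, this is a Volterra equation for `y'` whose Picard
iterates converge locally uniformly on the whole line, across the singular point `r = 0`.

With `v = r u` and `θ = r d/dr`, (equaz) reads `θ² v = 2 v (1 + v) (2 + v) + r h θ v`. Hence
`(θ v)² - (v (2 + v))²` has derivative `2 h (θ v)² ≤ 0`; as it vanishes at `r = 0`, it follows that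
`|θ v| ≤ |v (2 + v)|`. By Grönwall `v` reaches neither `0` nor `-2`. The same bound makes `y`
nondecreasing as long as `-2 < v < 0`, so that `α ≤ y < 0` and the truncation is never active.
-/

open Set Filter Topology
open scoped NNReal

section Volterra

variable {E : Type*} [NormedAddCommGroup E]

/-- A Volterra operator: on every bounded interval around `0`, the difference of two values of `T`
at `r` is controlled by the `L¹` distance of the arguments between `0` and `r` only. The absolute
value around the integral serves negative `r`. -/
def IsVolterra (T : C(ℝ, E) → C(ℝ, E)) : Prop :=
  ∀ R : ℝ, ∃ C : ℝ≥0, ∀ p q : C(ℝ, E), ∀ r, |r| ≤ R →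
    ‖T p r - T q r‖ ≤ C * |∫ s in (0 : ℝ)..r, ‖p s - q s‖|

lemma abs_integral_norm_sub_le (p q : ℝ → E) {r : ℝ} {g : ℝ → ℝ} (hg : Continuous g)
    (hpq : ∀ s, |s| ≤ |r| → ‖p s - q s‖ ≤ g s) :
    |∫ s in (0 : ℝ)..r, ‖p s - q s‖| ≤ |∫ s in (0 : ℝ)..r, g s| := by
  rw [← Real.norm_eq_abs]
  refine intervalIntegral.norm_integral_le_abs_of_norm_le
    ((MeasureTheory.ae_restrict_mem measurableSet_uIoc).mono fun s hs ↦ ?_)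
    (hg.intervalIntegrable _ _)
  rw [norm_norm]
  exact hpq s (by simpa using abs_sub_left_of_mem_uIcc (uIoc_subset_uIcc hs))

lemma abs_integral_zero_abs_pow (n : ℕ) (r : ℝ) :
    |∫ s in (0 : ℝ)..r, |s| ^ n| = |r| ^ (n + 1) / (n + 1) := by
  rw [intervalIntegral.abs_intervalIntegral_eq]
  have h := integral_pow_abs_sub_uIoc (a := 0) (b := r) n
  simp only [sub_zero] at h
  rw [h, abs_of_nonneg (by positivity)]

lemma abs_mul_integral_norm_comp_mul (f : ℝ → E) (r : ℝ) :
    |r| * ∫ t in (0 : ℝ)..1, ‖f (r * t)‖ = |∫ s in (0 : ℝ)..r, ‖f s‖| := by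
  have hsubst := intervalIntegral.smul_integral_comp_mul_left (a := 0) (b := 1) (fun s ↦ ‖f s‖) r
  rw [mul_zero, mul_one] at hsubst
  rw [← hsubst, smul_eq_mul, abs_mul, abs_of_nonneg
    (intervalIntegral.integral_nonneg zero_le_one fun t _ ↦ norm_nonneg (f (r * t)))]

lemma norm_iterate_sub_iterate_le {T : C(ℝ, E) → C(ℝ, E)} {R C M : ℝ} (hC : 0 ≤ C)
    (hT : ∀ p q : C(ℝ, E), ∀ r, |r| ≤ R →
      ‖T p r - T q r‖ ≤ C * |∫ s in (0 : ℝ)..r, ‖p s - q s‖|)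
    {p q : C(ℝ, E)} (hpq : ∀ r, |r| ≤ R → ‖p r - q r‖ ≤ M) (n : ℕ) {r : ℝ} (hr : |r| ≤ R) :
    ‖T^[n] p r - T^[n] q r‖ ≤ M * ((C * |r|) ^ n / n.factorial) := by
  induction n generalizing r with
  | zero => simpa using hpq r hr
  | succ n ih =>
    have hM : 0 ≤ M := (norm_nonneg _).trans (hpq r hr)
    have hmono := abs_integral_norm_sub_le (T^[n] p) (T^[n] q)
      (g := fun s ↦ M * ((C * |s|) ^ n / n.factorial)) (by fun_prop) fun s hs ↦ ih (hs.trans hr)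
    have heval : |∫ s in (0 : ℝ)..r, M * ((C * |s|) ^ n / n.factorial)| =
        M * (C ^ n / n.factorial) * (|r| ^ (n + 1) / (n + 1)) := by
      rw [← abs_integral_zero_abs_pow n r,
        ← abs_of_nonneg (show 0 ≤ M * (C ^ n / n.factorial) by positivity), ← abs_mul,
        ← intervalIntegral.integral_const_mul]
      exact congrArg abs (intervalIntegral.integral_congr fun s _ ↦ by ring)
    rw [Function.iterate_succ_apply', Function.iterate_succ_apply']
    calc ‖T (T^[n] p) r - T (T^[n] q) r‖
        ≤ C * |∫ s in (0 : ℝ)..r, ‖T^[n] p s - T^[n] q s‖| := hT _ _ r hr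
      _ ≤ C * (M * (C ^ n / n.factorial) * (|r| ^ (n + 1) / (n + 1))) := by
        gcongr
        exact hmono.trans_eq heval
      _ = M * ((C * |r|) ^ (n + 1) / (n + 1).factorial) := by
        rw [Nat.factorial_succ]
        push_cast
        field_simp
        ring

lemma IsVolterra.continuous {T : C(ℝ, E) → C(ℝ, E)} (hT : IsVolterra T) : Continuous T := by
  rw [continuous_iff_continuousAt]
  intro q
  refine ContinuousMap.tendsto_iff_forall_isCompact_tendstoUniformlyOn.2 fun K hK ↦ ?_
  obtain ⟨R, hKR⟩ := hK.isBounded.subset_closedBall 0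
  obtain ⟨C, hC⟩ := hT R
  have hnear := Metric.tendstoUniformlyOn_iff.1
    (ContinuousMap.tendsto_iff_forall_isCompact_tendstoUniformlyOn.1 (tendsto_id (x := 𝓝 q))
      (Metric.closedBall 0 R) (isCompact_closedBall 0 R))
  refine Metric.tendstoUniformlyOn_iff.2 fun ε hε ↦ ?_
  filter_upwards [hnear (ε / (C * |R| + 1)) (by positivity)] with p hp r hrK
  have hr : |r| ≤ R := by simpa using hKR hrK
  have hrR : |r| ≤ |R| := hr.trans (le_abs_self R)
  have hint := abs_integral_norm_sub_le q p (r := r) (g := fun _ ↦ ε / (C * |R| + 1))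
    continuous_const fun s hs ↦ by
      simpa [dist_eq_norm] using (hp s (by simpa using hs.trans hr)).le
  calc dist (T q r) (T p r) ≤ C * |∫ s in (0 : ℝ)..r, ‖q s - p s‖| := by
        simpa only [dist_eq_norm] using hC q p r hr
    _ ≤ C * (|R| * (ε / (C * |R| + 1))) := by
        gcongr
        refine hint.trans ?_
        rw [intervalIntegral.integral_const, sub_zero, smul_eq_mul, abs_mul,
          abs_of_pos (show 0 < ε / (C * |R| + 1) by positivity)]
        gcongr
    _ = C * |R| / (C * |R| + 1) * ε := by ring
    _ < ε := by
        refine mul_lt_of_lt_one_left hε ?_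
        rw [div_lt_one (by positivity)]
        exact lt_add_one _

theorem IsVolterra.exists_isFixedPt [CompleteSpace E] {T : C(ℝ, E) → C(ℝ, E)}
    (hT : IsVolterra T) : ∃ p, Function.IsFixedPt T p := by
  have hsum : Summable fun n ↦ T^[n + 1] 0 - T^[n] 0 := by
    refine ContinuousMap.summable_of_locally_summable_norm fun K ↦ ?_
    obtain ⟨R, hKR⟩ := K.isCompact.isBounded.subset_closedBall 0
    obtain ⟨C, hC⟩ := hT R
    obtain ⟨M, hM⟩ := (isCompact_closedBall (0 : ℝ) R).exists_bound_of_continuousOn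
      (T 0 - 0).continuous.continuousOn
    refine .of_nonneg_of_le (fun n ↦ norm_nonneg _) (fun n ↦ ?_)
      ((Real.summable_pow_div_factorial (C * |R|)).mul_left |M|)
    rw [ContinuousMap.norm_le _ (by positivity)]
    rintro ⟨r, hrK⟩
    have hr : |r| ≤ R := by simpa using hKR hrK
    have hrR : |r| ≤ |R| := hr.trans (le_abs_self R)
    calc ‖(T^[n + 1] 0 - T^[n] 0) r‖ ≤ |M| * ((C * |r|) ^ n / n.factorial) :=
          norm_iterate_sub_iterate_le C.2 hC
            (fun s hs ↦ (hM s (by simpa using hs)).trans (le_abs_self M)) n hr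
      _ ≤ |M| * ((C * |R|) ^ n / n.factorial) := by
          gcongr
  refine ⟨∑' n, (T^[n + 1] 0 - T^[n] 0),
    isFixedPt_of_tendsto_iterate (x := 0) ?_ hT.continuous.continuousAt⟩
  simpa only [Finset.sum_range_sub (fun n ↦ T^[n] 0), Function.iterate_zero, id_eq, sub_zero]
    using hsum.hasSum.tendsto_sum_nat

end Volterra

section SingularInitialValueProblem

variable {E : Type*} [NormedAddCommGroup E] [NormedSpace ℝ E]

/-- The primitive of `p` with value `y₀` at `0`. -/
noncomputable def primitiveFrom (y₀ : E) (p : C(ℝ, E)) (r : ℝ) : E := y₀ + ∫ s in (0 : ℝ)..r, p s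

lemma primitiveFrom_zero (y₀ : E) (p : C(ℝ, E)) : primitiveFrom y₀ p 0 = y₀ := by
  simp [primitiveFrom]

lemma hasDerivAt_primitiveFrom [CompleteSpace E] (y₀ : E) (p : C(ℝ, E)) (r : ℝ) :
    HasDerivAt (primitiveFrom y₀ p) (p r) r :=
  (p.continuous.integral_hasStrictDerivAt 0 r).hasDerivAt.const_add y₀

@[fun_prop]
lemma continuous_primitiveFrom (y₀ : E) (p : C(ℝ, E)) : Continuous (primitiveFrom y₀ p) :=
  continuous_const.add (intervalIntegral.continuous_primitive
    (fun _ _ ↦ p.continuous.intervalIntegrable _ _) 0)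

lemma norm_primitiveFrom_sub_le (y₀ : E) (p q : C(ℝ, E)) {r s : ℝ} (hs : s ∈ uIcc 0 r) :
    ‖primitiveFrom y₀ p s - primitiveFrom y₀ q s‖ ≤ |∫ x in (0 : ℝ)..r, ‖p x - q x‖| := by
  rw [primitiveFrom, primitiveFrom, add_sub_add_left_eq_sub, ← intervalIntegral.integral_sub
    (p.continuous.intervalIntegrable _ _) (q.continuous.intervalIntegrable _ _)]
  refine intervalIntegral.norm_integral_le_abs_integral_norm.trans
    (intervalIntegral.abs_integral_mono_interval ?_ (.of_forall fun x ↦ norm_nonneg _)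
      (Continuous.intervalIntegrable (by fun_prop) _ _))
  exact uIoc_subset_uIoc_of_uIcc_subset_uIcc (uIcc_subset_uIcc_left hs)

/-- The integral operator whose fixed points are the derivatives `p = y'` of the solutions of
`r y'' + (m + 1) y' = Φ (r, y, y')`, `y 0 = y₀`. It is `r⁻¹ ^ (m + 1) ∫₀ʳ s ^ m Φ(s, y, p) ds`,
with `s = r t` substituted in order to be defined at `r = 0` too. -/
noncomputable def singularPicard (m : ℕ) (Φ : C(ℝ × E × E, E)) (y₀ : E) (p : C(ℝ, E)) :
    C(ℝ, E) where
  toFun r := ∫ t in (0 : ℝ)..1, t ^ m • Φ (r * t, primitiveFrom y₀ p (r * t), p (r * t))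
  continuous_toFun := intervalIntegral.continuous_parametric_intervalIntegral_of_continuous'
    (by unfold Function.uncurry; fun_prop) 0 1

lemma pow_smul_singularPicard (m : ℕ) (Φ : C(ℝ × E × E, E)) (y₀ : E) (p : C(ℝ, E)) (r : ℝ) :
    r ^ (m + 1) • singularPicard m Φ y₀ p r =
      ∫ s in (0 : ℝ)..r, s ^ m • Φ (s, primitiveFrom y₀ p s, p s) := by
  have hsubst := intervalIntegral.smul_integral_comp_mul_left (a := 0) (b := 1)
    (fun s ↦ s ^ m • Φ (s, primitiveFrom y₀ p s, p s)) r
  simp only [mul_pow, mul_smul, intervalIntegral.integral_smul, mul_zero, mul_one] at hsubst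
  rw [← hsubst, pow_succ', mul_smul]
  rfl

lemma singularPicard_zero [CompleteSpace E] (m : ℕ) (Φ : C(ℝ × E × E, E)) (y₀ : E)
    (p : C(ℝ, E)) : (m + 1 : ℝ) • singularPicard m Φ y₀ p 0 = Φ (0, y₀, p 0) := by
  have hval : singularPicard m Φ y₀ p 0 = ∫ t in (0 : ℝ)..1, t ^ m • Φ (0, y₀, p 0) := by
    simp [singularPicard, primitiveFrom_zero]
  rw [hval, intervalIntegral.integral_smul_const, integral_pow, smul_smul]
  simp [mul_inv_cancel₀ (show (m + 1 : ℝ) ≠ 0 by positivity)]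

/-- The Lipschitz condition making `r y'' + (m + 1) y' = Φ (r, y, y')` well posed at the singular
point `r = 0`: the Lipschitz constant in `y'` is `O(r)`. -/
def IsSingularLipschitz (Φ : ℝ × E × E → E) : Prop :=
  ∀ R : ℝ, ∃ C : ℝ≥0, ∀ s, |s| ≤ R → ∀ y z p q : E,
    ‖Φ (s, y, p) - Φ (s, z, q)‖ ≤ C * (‖y - z‖ + |s| * ‖p - q‖)

lemma norm_comp_primitiveFrom_sub_le {Φ : ℝ × E × E → E} {R : ℝ} {C : ℝ≥0}
    (hΦ : ∀ s, |s| ≤ R → ∀ y z p q : E,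
      ‖Φ (s, y, p) - Φ (s, z, q)‖ ≤ C * (‖y - z‖ + |s| * ‖p - q‖))
    (y₀ : E) (p q : C(ℝ, E)) {r t : ℝ} (hr : |r| ≤ R) (ht : t ∈ Icc (0 : ℝ) 1) :
    ‖Φ (r * t, primitiveFrom y₀ p (r * t), p (r * t)) -
        Φ (r * t, primitiveFrom y₀ q (r * t), q (r * t))‖ ≤
      C * (|∫ s in (0 : ℝ)..r, ‖p s - q s‖| + |r| * ‖p (r * t) - q (r * t)‖) := by
  have hmem : r * t ∈ uIcc 0 r := by
    simpa only [smul_eq_mul, mul_comm] using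
      ((convex_uIcc 0 r).starConvex left_mem_uIcc).smul_mem right_mem_uIcc ht.1 ht.2
  have hrt : |r * t| ≤ |r| := by simpa using abs_sub_left_of_mem_uIcc hmem
  refine (hΦ _ (hrt.trans hr) _ _ _ _).trans ?_
  gcongr
  exact norm_primitiveFrom_sub_le y₀ p q hmem

lemma isVolterra_singularPicard (m : ℕ) {Φ : C(ℝ × E × E, E)} (hΦ : IsSingularLipschitz Φ)
    (y₀ : E) : IsVolterra (singularPicard m Φ y₀) := by
  intro R
  obtain ⟨C, hC⟩ := hΦ R
  refine ⟨C * 2, fun p q r hr ↦ ?_⟩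
  set D := |∫ s in (0 : ℝ)..r, ‖p s - q s‖| with hD
  have hpoint : ∀ t ∈ Icc (0 : ℝ) 1,
      ‖t ^ m • Φ (r * t, primitiveFrom y₀ p (r * t), p (r * t)) -
        t ^ m • Φ (r * t, primitiveFrom y₀ q (r * t), q (r * t))‖ ≤
      C * (D + |r| * ‖p (r * t) - q (r * t)‖) := by
    intro t ht
    rw [← smul_sub, norm_smul, norm_pow, Real.norm_of_nonneg ht.1]
    exact (mul_le_of_le_one_left (norm_nonneg _) (pow_le_one₀ ht.1 ht.2)).trans
      (norm_comp_primitiveFrom_sub_le hC y₀ p q hr ht)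
  calc ‖singularPicard m Φ y₀ p r - singularPicard m Φ y₀ q r‖
      = ‖∫ t in (0 : ℝ)..1, (t ^ m • Φ (r * t, primitiveFrom y₀ p (r * t), p (r * t)) -
          t ^ m • Φ (r * t, primitiveFrom y₀ q (r * t), q (r * t)))‖ := by
        rw [intervalIntegral.integral_sub (Continuous.intervalIntegrable (by fun_prop) _ _)
          (Continuous.intervalIntegrable (by fun_prop) _ _)]
        rfl
    _ ≤ ∫ t in (0 : ℝ)..1, C * (D + |r| * ‖p (r * t) - q (r * t)‖) :=
        intervalIntegral.norm_integral_le_of_norm_le zero_le_one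
          (.of_forall fun t ht ↦ hpoint t (Ioc_subset_Icc_self ht))
          (Continuous.intervalIntegrable (by fun_prop) _ _)
    _ = C * (D + |r| * ∫ t in (0 : ℝ)..1, ‖p (r * t) - q (r * t)‖) := by
        rw [intervalIntegral.integral_const_mul, intervalIntegral.integral_add
          (Continuous.intervalIntegrable (by fun_prop) _ _)
          (Continuous.intervalIntegrable (by fun_prop) _ _), intervalIntegral.integral_const_mul,
          intervalIntegral.integral_const, sub_zero, one_smul]
    _ = ↑(C * 2) * D := by
        rw [abs_mul_integral_norm_comp_mul (fun s ↦ p s - q s), ← hD]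
        push_cast
        ring

theorem exists_solution_singular_ivp [CompleteSpace E] (m : ℕ) {Φ : C(ℝ × E × E, E)}
    (hΦ : IsSingularLipschitz Φ) (y₀ : E) :
    ∃ y p : ℝ → E, Continuous p ∧ (∀ r, HasDerivAt y (p r) r) ∧ y 0 = y₀ ∧
      (m + 1 : ℝ) • p 0 = Φ (0, y₀, p 0) ∧
      ∀ r, r ≠ 0 → HasDerivAt p (r⁻¹ • (Φ (r, y r, p r) - (m + 1 : ℝ) • p r)) r := by
  obtain ⟨p, hp⟩ := (isVolterra_singularPicard m hΦ y₀).exists_isFixedPt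
  refine ⟨primitiveFrom y₀ p, p, p.continuous, hasDerivAt_primitiveFrom y₀ p,
    primitiveFrom_zero y₀ p, ?_, fun r hr ↦ ?_⟩
  · simpa only [hp.eq] using singularPicard_zero m Φ y₀ p
  have hint : ∀ x, x ^ (m + 1) • p x =
      ∫ s in (0 : ℝ)..x, s ^ m • Φ (s, primitiveFrom y₀ p s, p s) := fun x ↦ by
    simpa only [hp.eq] using pow_smul_singularPicard m Φ y₀ p x
  have hp_eq : (⇑p) =ᶠ[𝓝 r] fun x ↦ (x ^ (m + 1))⁻¹ •
      ∫ s in (0 : ℝ)..x, s ^ m • Φ (s, primitiveFrom y₀ p s, p s) := by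
    filter_upwards [isOpen_ne.mem_nhds hr] with x hx
    rw [← hint, inv_smul_smul₀ (pow_ne_zero _ hx)]
  have hderiv := ((hasDerivAt_pow (m + 1) r).inv (pow_ne_zero _ hr)).smul
    (Continuous.integral_hasStrictDerivAt (f := fun s ↦ s ^ m • Φ (s, primitiveFrom y₀ p s, p s))
      (by fun_prop) 0 r).hasDerivAt
  refine (hderiv.congr_of_eventuallyEq hp_eq).congr_deriv ?_
  rw [← hint, smul_smul, smul_smul, smul_sub, smul_smul, sub_eq_add_neg, ← neg_smul]
  congr 2
  · simp only [Pi.inv_apply]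
    field_simp
    rw [pow_succ]
  · push_cast
    field_simp
    rw [pow_succ]

end SingularInitialValueProblem

section Truncation

lemma exists_lipschitz_comp_projIcc {f : ℝ × ℝ → ℝ} (hf : ContDiff ℝ 1 f) {a b : ℝ} (hab : a ≤ b)
    (R : ℝ) : ∃ C : ℝ≥0, ∀ s, |s| ≤ R → ∀ y z : ℝ,
      |f (s, projIcc a b hab y) - f (s, projIcc a b hab z)| ≤ C * |y - z| := by
  obtain ⟨C, hC⟩ := (hf.contDiffOn (s := Icc (-R) R ×ˢ Icc a b)).exists_lipschitzOnWith
    one_ne_zero ((convex_Icc _ _).prod (convex_Icc _ _)) (isCompact_Icc.prod isCompact_Icc)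
  refine ⟨C, fun s hs y z ↦ ?_⟩
  have hLip := hC.dist_le_mul (s, ↑(projIcc a b hab y)) ⟨abs_le.1 hs, Subtype.prop _⟩
    (s, ↑(projIcc a b hab z)) ⟨abs_le.1 hs, Subtype.prop _⟩
  rw [Prod.dist_eq, dist_self, max_eq_right dist_nonneg, Real.dist_eq, Real.dist_eq] at hLip
  exact hLip.trans (mul_le_mul_of_nonneg_left (abs_projIcc_sub_projIcc hab) C.2)

/-- The right-hand side of `r y'' + 5 y' = Φ (r, y, y')`, the equation satisfied by `y = u / r`
when `u` solves (equaz), with `y` truncated to `[a, 0]` in the nonlinear terms. -/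
noncomputable def truncatedForce (h : C(ℝ, ℝ)) {a : ℝ} (ha : a ≤ 0) : C(ℝ × ℝ × ℝ, ℝ) where
  toFun x := x.1 * (6 * (projIcc a 0 ha x.2.1 : ℝ) ^ 2 +
    2 * x.1 ^ 2 * (projIcc a 0 ha x.2.1 : ℝ) ^ 3) + h x.1 * (2 * x.2.1 + x.1 * x.2.2)
  continuous_toFun := by fun_prop

lemma isSingularLipschitz_truncatedForce (h : C(ℝ, ℝ)) {a : ℝ} (ha : a ≤ 0) :
    IsSingularLipschitz (truncatedForce h ha) := by
  intro R
  obtain ⟨C, hC⟩ := exists_lipschitz_comp_projIcc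
    (f := fun x ↦ x.1 * (6 * x.2 ^ 2 + 2 * x.1 ^ 2 * x.2 ^ 3)) (by fun_prop) ha R
  obtain ⟨H, hH⟩ := (isCompact_closedBall (0 : ℝ) R).exists_bound_of_continuousOn
    h.continuous.continuousOn
  refine ⟨C + 2 * ‖H‖₊, fun s hs y z p q ↦ ?_⟩
  have hHs : |h s| ≤ |H| := (hH s (by simpa using hs)).trans (le_abs_self H)
  have hdamp : |h s * (2 * (y - z) + s * (p - q))| ≤ |H| * (2 * (|y - z| + |s| * |p - q|)) := by
    rw [abs_mul]
    gcongr
    refine (abs_add_le _ _).trans ?_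
    rw [abs_mul, abs_mul, abs_two]
    nlinarith [mul_nonneg (abs_nonneg s) (abs_nonneg (p - q))]
  calc ‖truncatedForce h ha (s, y, p) - truncatedForce h ha (s, z, q)‖
      = |(s * (6 * (projIcc a 0 ha y : ℝ) ^ 2 + 2 * s ^ 2 * (projIcc a 0 ha y : ℝ) ^ 3) -
          s * (6 * (projIcc a 0 ha z : ℝ) ^ 2 + 2 * s ^ 2 * (projIcc a 0 ha z : ℝ) ^ 3)) +
          h s * (2 * (y - z) + s * (p - q))| := by
        rw [Real.norm_eq_abs]
        simp only [truncatedForce, ContinuousMap.coe_mk]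
        ring_nf
    _ ≤ C * |y - z| + |H| * (2 * (|y - z| + |s| * |p - q|)) :=
        (abs_add_le _ _).trans (add_le_add (hC s hs y z) hdamp)
    _ ≤ ↑(C + 2 * ‖H‖₊) * (‖y - z‖ + |s| * ‖p - q‖) := by
        have hC_nonneg : 0 ≤ (C : ℝ) * (|s| * |p - q|) := by positivity
        push_cast
        simp only [Real.norm_eq_abs]
        linarith

end Truncation

section AprioriEstimate

lemma pos_of_neg_mul_le_deriv {f f' : ℝ → ℝ} {K a b : ℝ} (hf : ContinuousOn f (Icc a b))
    (hf' : ∀ x ∈ Ico a b, HasDerivWithinAt f (f' x) (Ici x) x) (ha : 0 < f a)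
    (bound : ∀ x ∈ Ico a b, -K * f x ≤ f' x) {x : ℝ} (hx : x ∈ Icc a b) : 0 < f x := by
  have hgron := le_gronwallBound_of_liminf_deriv_right_le (f := -f) (f' := -f') (K := -K) (ε := 0)
    hf.neg (fun x hx _ ↦ (hf' x hx).neg.liminf_right_slope_le) le_rfl
    (fun x hx ↦ by
      simpa only [Pi.neg_apply, add_zero, mul_neg, neg_le_neg_iff] using bound x hx) x hx
  rw [gronwallBound_ε0, Pi.neg_apply, Pi.neg_apply, neg_mul, neg_le_neg_iff] at hgron
  exact (mul_pos ha (Real.exp_pos _)).trans_le hgron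

lemma Ici_subset_of_isOpen_of_Ico_subset {α : Type*} [ConditionallyCompleteLinearOrder α]
    [TopologicalSpace α] [OrderTopology α] {S : Set α} {a : α} (hS : IsOpen S)
    (hstep : ∀ b, a ≤ b → Ico a b ⊆ S → b ∈ S) : Ici a ⊆ S := by
  by_contra hsub
  obtain ⟨c, hc⟩ := not_subset.1 hsub
  have hbdd : BddBelow (Ici a ∩ Sᶜ) := ⟨a, fun _ hx ↦ hx.1⟩
  obtain ⟨hle, hnot⟩ := (isClosed_Ici.inter hS.isClosed_compl).csInf_mem ⟨c, hc⟩ hbdd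
  refine hnot (hstep _ hle fun x hx ↦ ?_)
  by_contra hxS
  exact (csInf_le hbdd ⟨hx.1, hxS⟩).not_gt hx.2

/-- The value of `y''` prescribed by (equaz) for `y = u / r`, with `p` standing for `y'`. -/
noncomputable def reducedAccel (h : ℝ → ℝ) (r y p : ℝ) : ℝ :=
  6 * y ^ 2 + 2 * r ^ 2 * y ^ 3 + (h r * (2 * y + r * p) - 5 * p) / r

/-- With `v = r u = r² y` and `θ = r d/dr`, this is `(θ v)² - (v (2 + v))²`, a first integral of
`θ² v = 2 v (1 + v) (2 + v)`, which is (equaz) for `h = 0`. Here `p` stands for `y'`. -/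
def energy (y p : ℝ → ℝ) (r : ℝ) : ℝ :=
  r ^ 4 * ((2 * y r + r * p r) ^ 2 - (y r * (2 + r ^ 2 * y r)) ^ 2)

/-- The bounds `-2 / r < u r < 0` in terms of `y = u / r`, in a form that is meaningful at
`r = 0` as well. -/
def InStrip (y : ℝ → ℝ) (r : ℝ) : Prop := y r < 0 ∧ 0 < 2 + r ^ 2 * y r

variable {h y p : ℝ → ℝ} {R : ℝ}

lemma hasDerivAt_energy {r : ℝ} (hr : r ≠ 0) (hy : HasDerivAt y (p r) r)
    (hp : HasDerivAt p (reducedAccel h r (y r) (p r)) r) :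
    HasDerivAt (energy y p) (2 * h r * (r ^ 2 * (2 * y r + r * p r)) ^ 2) r := by
  have hid := hasDerivAt_id r
  have hkin := ((hy.const_mul 2).add (hid.mul hp)).pow 2
  have hpot := (hy.mul (((hid.pow 2).mul hy).const_add 2)).pow 2
  refine ((hid.pow 4).mul (hkin.sub hpot)).congr_deriv ?_
  simp only [Nat.cast_ofNat, id_eq, Nat.add_one_sub_one, mul_one, Pi.mul_apply, Pi.pow_apply,
    Pi.sub_apply, Pi.add_apply, pow_one, one_mul, reducedAccel]
  field_simp
  ring

lemma abs_two_mul_add_mul_deriv_le (hh : ∀ r, 0 < r → h r ≤ 0) (hpc : Continuous p)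
    (hy : ∀ r, HasDerivAt y (p r) r)
    (hp : ∀ r ∈ Ioo 0 R, HasDerivAt p (reducedAccel h r (y r) (p r)) r) {r : ℝ}
    (hr : r ∈ Ico 0 R) : |2 * y r + r * p r| ≤ |y r * (2 + r ^ 2 * y r)| := by
  obtain rfl | hr0 := hr.1.eq_or_lt
  · simp [mul_comm]
  have hyc : Continuous y := continuous_iff_continuousAt.2 fun r ↦ (hy r).continuousAt
  have hanti : AntitoneOn (energy y p) (Icc 0 r) := by
    refine antitoneOn_of_hasDerivWithinAt_nonpos (convex_Icc 0 r)
      (f' := fun x ↦ 2 * h x * (x ^ 2 * (2 * y x + x * p x)) ^ 2)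
      (by unfold energy; fun_prop) (fun x hx ↦ ?_) fun x hx ↦ ?_
    all_goals rw [interior_Icc] at hx
    · exact (hasDerivAt_energy hx.1.ne' (hy x)
        (hp x ⟨hx.1, hx.2.trans hr.2⟩)).hasDerivWithinAt
    · exact mul_nonpos_of_nonpos_of_nonneg (by linarith [hh x hx.1]) (sq_nonneg _)
  have hle : energy y p r ≤ 0 := by
    simpa [energy] using hanti (left_mem_Icc.2 hr.1) (right_mem_Icc.2 hr.1) hr.1
  exact sq_le_sq.1 (sub_nonpos.1 (nonpos_of_mul_nonpos_right hle (by positivity)))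

lemma InStrip.abs_mul_eq {r : ℝ} (hs : InStrip y r) :
    |y r * (2 + r ^ 2 * y r)| = -y r * (2 + r ^ 2 * y r) := by
  rw [abs_mul, abs_of_neg hs.1, abs_of_pos hs.2]

lemma monotoneOn_of_inStrip (hy : ∀ r, HasDerivAt y (p r) r) (hs : ∀ r ∈ Ico 0 R, InStrip y r)
    (hv : ∀ r ∈ Ico 0 R, |2 * y r + r * p r| ≤ |y r * (2 + r ^ 2 * y r)|) :
    MonotoneOn y (Icc 0 R) := by
  refine monotoneOn_of_hasDerivWithinAt_nonneg (convex_Icc 0 R)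
    (fun x _ ↦ (hy x).continuousAt.continuousWithinAt) (fun x _ ↦ (hy x).hasDerivWithinAt)
    fun x hx ↦ ?_
  rw [interior_Icc] at hx
  have hlow := (abs_le.1 ((hv x (Ioo_subset_Ico_self hx)).trans_eq
    (hs x (Ioo_subset_Ico_self hx)).abs_mul_eq)).1
  have hxp : 0 ≤ x * p x := by nlinarith [sq_nonneg (x * y x)]
  exact nonneg_of_mul_nonneg_right hxp hx.1

lemma neg_of_inStrip (hR : 0 < R) (hy : ∀ r, HasDerivAt y (p r) r)
    (hs : ∀ r ∈ Ico 0 R, InStrip y r)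
    (hv : ∀ r ∈ Ico 0 R, |2 * y r + r * p r| ≤ |y r * (2 + r ^ 2 * y r)|) : y R < 0 := by
  have hmem : ∀ x ∈ Ico (R / 2) R, x ∈ Ico 0 R := fun x hx ↦ ⟨by linarith [hx.1], hx.2⟩
  refine neg_pos.1 (pos_of_neg_mul_le_deriv (f := -y) (f' := -p) (K := 8 / R) (a := R / 2) (b := R)
    (fun x _ ↦ (hy x).neg.continuousAt.continuousWithinAt) (fun x _ ↦ (hy x).neg.hasDerivWithinAt)
    (neg_pos.2 (hs _ (hmem _ ⟨le_rfl, by linarith⟩)).1) (fun x hx ↦ ?_)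
    (right_mem_Icc.2 (by linarith)))
  have hsx := hs x (hmem x hx)
  have hupp := (abs_le.1 ((hv x (hmem x hx)).trans_eq hsx.abs_mul_eq)).2
  have hxp : x * p x ≤ -4 * y x := by nlinarith [sq_nonneg (x * y x)]
  rw [Pi.neg_apply, Pi.neg_apply, mul_neg, neg_mul, neg_neg, div_mul_eq_mul_div, div_le_iff₀ hR]
  nlinarith [hx.1, hsx.1]

lemma two_add_sq_mul_pos_of_inStrip (hR : 0 ≤ R) (hy : ∀ r, HasDerivAt y (p r) r)
    (hs : ∀ r ∈ Ico 0 R, InStrip y r)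
    (hv : ∀ r ∈ Ico 0 R, |2 * y r + r * p r| ≤ |y r * (2 + r ^ 2 * y r)|) :
    0 < 2 + R ^ 2 * y R := by
  have hderiv : ∀ x, HasDerivAt (fun r ↦ 2 + r ^ 2 * y r) (x * (2 * y x + x * p x)) x := fun x ↦
    (((hasDerivAt_pow 2 x).mul (hy x)).const_add 2).congr_deriv (by push_cast; ring)
  refine pos_of_neg_mul_le_deriv (f := fun r ↦ 2 + r ^ 2 * y r) (K := -(R * y 0)) (a := 0)
    (fun x _ ↦ (hderiv x).continuousAt.continuousWithinAt)
    (fun x _ ↦ (hderiv x).hasDerivWithinAt) (by simp) (fun x hx ↦ ?_) (right_mem_Icc.2 hR)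
  have hlow := (abs_le.1 ((hv x hx).trans_eq (hs x hx).abs_mul_eq)).1
  have hmono : y 0 ≤ y x := monotoneOn_of_inStrip hy hs hv (left_mem_Icc.2 hR)
    (Ico_subset_Icc_self hx) hx.1
  have hpos := (hs x hx).2
  have hneg : y 0 < 0 := (hs 0 ⟨le_rfl, hx.1.trans_lt hx.2⟩).1
  calc -(-(R * y 0)) * (2 + x ^ 2 * y x) = R * (y 0 * (2 + x ^ 2 * y x)) := by ring
    _ ≤ x * (y 0 * (2 + x ^ 2 * y x)) :=
        mul_le_mul_of_nonpos_right hx.2.le (mul_nonpos_of_nonpos_of_nonneg hneg.le hpos.le)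
    _ ≤ x * (y x * (2 + x ^ 2 * y x)) := by
        gcongr
        exact hx.1
    _ ≤ x * (2 * y x + x * p x) := mul_le_mul_of_nonneg_left (by linarith) hx.1

theorem inStrip_of_hasDerivAt_reducedAccel (hh : ∀ r, 0 < r → h r ≤ 0) (hpc : Continuous p)
    (hy : ∀ r, HasDerivAt y (p r) r) (hy0 : y 0 < 0) {a : ℝ} (ha : a < y 0)
    (hp : ∀ r, 0 < r → y r ∈ Icc a 0 → HasDerivAt p (reducedAccel h r (y r) (p r)) r) {r : ℝ}
    (hr : 0 ≤ r) : a < y r ∧ InStrip y r := by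
  have hyc : Continuous y := continuous_iff_continuousAt.2 fun r ↦ (hy r).continuousAt
  have hopen : IsOpen {r | a < y r ∧ InStrip y r} :=
    (isOpen_lt continuous_const hyc).and ((isOpen_lt hyc continuous_const).and
      (isOpen_lt (g := fun r ↦ 2 + r ^ 2 * y r) continuous_const (by fun_prop)))
  refine Ici_subset_of_isOpen_of_Ico_subset hopen (fun R hR hsub ↦ ?_) (mem_Ici.2 hr)
  obtain rfl | hR0 := hR.eq_or_lt
  · exact ⟨ha, hy0, by simp⟩
  have hs : ∀ r ∈ Ico 0 R, InStrip y r := fun r hr ↦ (hsub hr).2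
  have hv : ∀ r ∈ Ico 0 R, |2 * y r + r * p r| ≤ |y r * (2 + r ^ 2 * y r)| := fun r hr ↦
    abs_two_mul_add_mul_deriv_le hh hpc hy (fun x hx ↦ hp x hx.1
      ⟨(hsub (Ioo_subset_Ico_self hx)).1.le, (hs x (Ioo_subset_Ico_self hx)).1.le⟩) hr
  have hmono := monotoneOn_of_inStrip hy hs hv (left_mem_Icc.2 hR) (right_mem_Icc.2 hR) hR
  exact ⟨ha.trans_le hmono, neg_of_inStrip hR0 hy hs hv,
    two_add_sq_mul_pos_of_inStrip hR hy hs hv⟩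

end AprioriEstimate

section Reduction

theorem exists_reduced_solution {h : ℝ → ℝ} (hc : ContinuousOn h (Ici 0))
    (hh : ∀ r, 0 < r → h r ≤ 0) {α : ℝ} (hα : α < 0) :
    ∃ y p : ℝ → ℝ, Continuous p ∧ (∀ r, HasDerivAt y (p r) r) ∧ y 0 = α ∧
      5 * p 0 = 2 * h 0 * α ∧
      ∀ r, 0 < r → HasDerivAt p (reducedAccel h r (y r) (p r)) r ∧ InStrip y r := by
  let g : C(ℝ, ℝ) := ⟨fun r ↦ h (max r 0),
    hc.comp_continuous (by fun_prop) fun r ↦ mem_Ici.2 (le_max_right r 0)⟩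
  have hg : ∀ r, 0 ≤ r → g r = h r := fun r hr ↦ congrArg h (max_eq_left hr)
  have ha : α - 1 ≤ 0 := by linarith
  obtain ⟨y, p, hpc, hy, hy0, hp0, hp⟩ :=
    exists_solution_singular_ivp 4 (isSingularLipschitz_truncatedForce g ha) α
  have hp_of_mem : ∀ r, 0 < r → y r ∈ Icc (α - 1) 0 →
      HasDerivAt p (reducedAccel h r (y r) (p r)) r := fun r hr hyr ↦ by
    refine (hp r hr.ne').congr_deriv ?_
    simp only [truncatedForce, ContinuousMap.coe_mk, projIcc_of_mem ha hyr, hg r hr.le,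
      reducedAccel, smul_eq_mul]
    field_simp
    push_cast
    ring
  have hstrip : ∀ r, 0 ≤ r → α - 1 < y r ∧ InStrip y r := fun r hr ↦
    inStrip_of_hasDerivAt_reducedAccel hh hpc hy (hy0.trans_lt hα) (by linarith) hp_of_mem hr
  refine ⟨y, p, hpc, hy, hy0, ?_, fun r hr ↦ ⟨hp_of_mem r hr ?_, (hstrip r hr.le).2⟩⟩
  · simp only [truncatedForce, ContinuousMap.coe_mk, hg 0 le_rfl, smul_eq_mul] at hp0
    push_cast at hp0
    linarith
  · exact ⟨(hstrip r hr.le).1.le, (hstrip r hr.le).2.1.le⟩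

lemma hasDerivAt_mul_self_zero {p : ℝ → ℝ} (hp : ContinuousAt p 0) :
    HasDerivAt (fun r ↦ r * p r) (p 0) 0 := by
  rw [hasDerivAt_iff_tendsto_slope]
  refine (hp.tendsto.mono_left nhdsWithin_le_nhds).congr' ?_
  filter_upwards [self_mem_nhdsWithin] with x (hx : x ≠ 0)
  simp [slope_def_field, hx]

theorem solOn4_of_reducedAccel {h y p : ℝ → ℝ} {α : ℝ} (hc : ContinuousOn h (Ici 0))
    (hpc : Continuous p) (hy : ∀ r, HasDerivAt y (p r) r) (hy0 : y 0 = α)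
    (hp0 : 5 * p 0 = 2 * h 0 * α)
    (hp : ∀ r, 0 < r → HasDerivAt p (reducedAccel h r (y r) (p r)) r) :
    SolOn4 h α (fun r ↦ r * y r) (fun r ↦ y r + r * p r)
      (fun r ↦ r * (6 * y r ^ 2 + 2 * r ^ 2 * y r ^ 3) + h r * (2 * y r + r * p r) - 3 * p r)
      (Ici 0) := by
  have hyc : Continuous y := continuous_iff_continuousAt.2 fun r ↦ (hy r).continuousAt
  refine ⟨fun r _ ↦ ?_, fun r hr ↦ HasDerivAt.hasDerivWithinAt ?_, by fun_prop, by simp,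
    by simp [hy0], fun r _ hr ↦ ?_⟩
  · exact (((hasDerivAt_id r).mul (hy r)).congr_deriv (by simp)).hasDerivWithinAt
  · obtain rfl | hr0 := (mem_Ici.1 hr).eq_or_lt
    · refine ((hy 0).add (hasDerivAt_mul_self_zero hpc.continuousAt)).congr_deriv ?_
      simp only [hy0]
      linarith
    · refine ((hy r).add ((hasDerivAt_id r).mul (hp r hr0))).congr_deriv ?_
      simp only [id_eq, one_mul, reducedAccel]
      field_simp
      ring
  · simp only [Equaz4]
    field_simp
    ring

lemma InStrip.bounds {y : ℝ → ℝ} {r : ℝ} (hs : InStrip y r) (hr : 0 < r) :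
    -2 / r < r * y r ∧ r * y r < 0 := by
  refine ⟨?_, mul_neg_of_pos_of_neg hr hs.1⟩
  rw [div_lt_iff₀ hr]
  linarith [hs.2]

end Reduction

/-- **Theorem (existence, `n = 4`).** If `h ≤ 0` on `(0,∞)`, then for every `α < 0` the
    solution of (equaz)-(ic) is global and satisfies `-2/r < u(r) < 0` for all `r > 0`. -/
theorem existence_dimension_four (h : ℝ → ℝ) (hhc : ContinuousOn h (Set.Ici 0))
    (hh : ∀ r : ℝ, 0 < r → h r ≤ 0) (α : ℝ) (hα : α < 0) :
    ∃ u u' u'' : ℝ → ℝ, SolOn4 h α u u' u'' (Set.Ici 0) ∧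
      ∀ r : ℝ, 0 < r → -2 / r < u r ∧ u r < 0 := by
  obtain ⟨y, p, hpc, hy, hy0, hp0, hp⟩ := exists_reduced_solution hhc hh hα
  exact ⟨_, _, _, solOn4_of_reducedAccel hhc hpc hy hy0 hp0 fun r hr ↦ (hp r hr).1,
    fun r hr ↦ (hp r hr).2.bounds hr⟩
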